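/- arXiv:1810.10849 — 2 statements merged into one kernel-verified Lean document; each statement's English description precedes it below -/
import Mathlib

section
/- There is a constant C = C(d) > 0, depending only on the dimension d, such that for every u₀ ∈ L²(ℝ^d), every T > 0 and every N > 0, the sampled values satisfy (Σ_{n∈ℤ^d} |u(T, n/N)|²)^{1/2} ≤ C (1 + (TN²)^{d/4}) T^{-d/4} ‖u₀‖, where u is the heat solution with initial datum u₀. -/
open MeasureTheory Filter Topology Metric ENNReal NNReal

noncomputable section

/-- `sinc` with value 1 at 0. -/
def sinc' (x : ℝ) : ℝ := if x = 0 then 1 else Real.sin x / x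

/-- The function `f_{N,n}(x) = ∏_j sin (π (N x_j - n_j)) / (π (N x_j - n_j))`. -/
def fN (d : ℕ) (N : ℝ) (n : Fin d → ℤ) (x : EuclideanSpace ℝ (Fin d)) : ℝ :=
  ∏ j, sinc' (Real.pi * (N * x j - n j))

/-- The lattice point `n / N` in `ℝ^d`. -/
def latticePt (d : ℕ) (N : ℝ) (n : Fin d → ℤ) : EuclideanSpace ℝ (Fin d) :=
  WithLp.toLp 2 fun j => (n j : ℝ) / N

/-- The heat solution at time `t > 0` with initial datum `u₀ ∈ L²(ℝ^d)`:
`u(t,x) = (4πt)^{-d/2} ∫ e^{-|x-y|²/(4t)} u₀(y) dy`. -/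
def heatSol (d : ℕ) (u₀ : EuclideanSpace ℝ (Fin d) → ℝ) (t : ℝ)
    (x : EuclideanSpace ℝ (Fin d)) : ℝ :=
  (4 * Real.pi * t) ^ (-(d : ℝ) / 2) * ∫ y, Real.exp (-‖x - y‖ ^ 2 / (4 * t)) * u₀ y

/-- The family `F` is summable in `L²(ℝ^d)` with sum `g`: the finite partial sums
converge to `g` in the `L²` norm along the filter of finite subsets of `ℤ^d`. -/
def HasSumL2 (d : ℕ) {V : Type} [NormedAddCommGroup V]
    (F : (Fin d → ℤ) → EuclideanSpace ℝ (Fin d) → V)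
    (g : EuclideanSpace ℝ (Fin d) → V) : Prop :=
  Tendsto (fun s : Finset (Fin d → ℤ) =>
    eLpNorm (fun x => g x - ∑ n ∈ s, F n x) 2 volume) atTop (𝓝 0)

/-- The closed cube `Q_r(0)` in `ℝ^d`, centered at the origin, of side length `2r`. -/
def Qcube (d : ℕ) (r : ℝ) : Set (EuclideanSpace ℝ (Fin d)) := {ξ | ∀ j, |ξ j| ≤ r}

/-- The truncated Fourier integral, with the paper's normalization
`(2π)^{-d/2} ∫_{|x| ≤ R} e^{-i x·ξ} f(x) dx`. -/
def truncFT (d : ℕ) (f : EuclideanSpace ℝ (Fin d) → ℂ) (R : ℝ)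
    (ξ : EuclideanSpace ℝ (Fin d)) : ℂ :=
  (((2 * Real.pi) ^ (-(d : ℝ) / 2) : ℝ) : ℂ) *
    ∫ x in closedBall (0 : EuclideanSpace ℝ (Fin d)) R,
      Complex.exp (-(Complex.I * ((inner ℝ x ξ : ℝ) : ℂ))) * f x

/-- `fhat` is the Fourier transform of `f ∈ L²(ℝ^d)` in the `L²` (Plancherel) sense:
`fhat ∈ L²` and the Fourier integrals of the truncations of `f` converge to `fhat`
in the `L²` norm. -/
def IsL2Fourier (d : ℕ) (f fhat : EuclideanSpace ℝ (Fin d) → ℂ) : Prop :=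
  MemLp fhat 2 volume ∧
    Tendsto (fun R : ℝ => eLpNorm (fun ξ => fhat ξ - truncFT d f R ξ) 2 volume)
      atTop (𝓝 0)

/-- The `L²(ℝ^d)` norm of a function, as a real number. -/
def l2norm (d : ℕ) {V : Type} [NormedAddCommGroup V]
    (f : EuclideanSpace ℝ (Fin d) → V) : ℝ :=
  (eLpNorm f 2 volume).toReal

/-!
The heat kernel has total mass `1`, so sampling the heat solution obeys a Schur test: the `ℓ²` norm
of the samples is at most `‖u₀‖` times the square root of `sup_y ∑ᵢ heatKernel T (pᵢ - y)`. If the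
points `pᵢ` are `1/N`-separated and `r = min (1/(2N)) √T`, the balls of radius `r` around them are
disjoint, and on each of them a Harnack inequality dominates `heatKernel T (pᵢ - y)` by the kernel
at time `2T`. Integrating over the balls bounds the sum by a multiple of `r⁻ⁿ`, which is at most
`(2N)ⁿ + T^(-n/2)`.
-/

section Averages

variable {α ι F : Type*} [MeasurableSpace α] {μ : Measure α} [NormedAddCommGroup F]

lemma lintegral_mul_sq_le {k f : α → ℝ≥0∞} (hk : AEMeasurable k μ) (hf : AEMeasurable f μ) :
    (∫⁻ y, k y * f y ∂μ) ^ 2 ≤ (∫⁻ y, k y ∂μ) * ∫⁻ y, k y * f y ^ 2 ∂μ := by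
  have split_sqrt (y : α) : k y * f y = k y ^ (1 / 2 : ℝ) * (k y * f y ^ 2) ^ (1 / 2 : ℝ) := by
    rw [ENNReal.mul_rpow_of_nonneg _ _ (by norm_num), ← mul_assoc, ← ENNReal.rpow_add_of_nonneg _ _
      (by norm_num) (by norm_num), ← ENNReal.rpow_natCast, ← ENNReal.rpow_mul]
    norm_num
  have holder : ∫⁻ y, k y * f y ∂μ ≤
      (∫⁻ y, k y ∂μ) ^ (1 / 2 : ℝ) * (∫⁻ y, k y * f y ^ 2 ∂μ) ^ (1 / 2 : ℝ) := by
    simp_rw [split_sqrt]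
    exact ENNReal.lintegral_mul_norm_pow_le hk (hk.mul (hf.pow_const 2)) (by norm_num)
      (by norm_num) (by norm_num)
  calc (∫⁻ y, k y * f y ∂μ) ^ 2
      ≤ ((∫⁻ y, k y ∂μ) ^ (1 / 2 : ℝ) * (∫⁻ y, k y * f y ^ 2 ∂μ) ^ (1 / 2 : ℝ)) ^ 2 := by
        gcongr
    _ = (∫⁻ y, k y ∂μ) * ∫⁻ y, k y * f y ^ 2 ∂μ := by
        rw [mul_pow, ← ENNReal.rpow_mul_natCast, ← ENNReal.rpow_mul_natCast]
        norm_num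

lemma tsum_enorm_integral_smul_sq_le [NormedSpace ℝ F] [Countable ι] {k : ι → α → ℝ} {u : α → F}
    {A B : ℝ≥0∞} (hk : ∀ i, AEStronglyMeasurable (k i) μ) (hu : AEStronglyMeasurable u μ)
    (hA : ∀ i, ∫⁻ y, ‖k i y‖ₑ ∂μ ≤ A) (hB : ∀ᵐ y ∂μ, ∑' i, ‖k i y‖ₑ ≤ B) :
    ∑' i, ‖∫ y, k i y • u y ∂μ‖ₑ ^ 2 ≤ A * B * eLpNorm u 2 μ ^ 2 := by
  have average_sq (i : ι) :
      ‖∫ y, k i y • u y ∂μ‖ₑ ^ 2 ≤ A * ∫⁻ y, ‖k i y‖ₑ * ‖u y‖ₑ ^ 2 ∂μ := by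
    calc ‖∫ y, k i y • u y ∂μ‖ₑ ^ 2
        ≤ (∫⁻ y, ‖k i y‖ₑ * ‖u y‖ₑ ∂μ) ^ 2 := by
          simpa only [enorm_smul] using
            pow_le_pow_left' (enorm_integral_le_lintegral_enorm fun y => k i y • u y) 2
      _ ≤ (∫⁻ y, ‖k i y‖ₑ ∂μ) * ∫⁻ y, ‖k i y‖ₑ * ‖u y‖ₑ ^ 2 ∂μ :=
          lintegral_mul_sq_le (hk i).enorm hu.enorm
      _ ≤ A * ∫⁻ y, ‖k i y‖ₑ * ‖u y‖ₑ ^ 2 ∂μ := by gcongr; exact hA i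
  have product_measurable (i : ι) : AEMeasurable (fun y => ‖k i y‖ₑ * ‖u y‖ₑ ^ 2) μ :=
    (hk i).enorm.mul (hu.enorm.pow_const 2)
  have sq_eLpNorm : eLpNorm u 2 μ ^ 2 = ∫⁻ y, ‖u y‖ₑ ^ 2 ∂μ := by
    simpa using eLpNorm_nnreal_pow_eq_lintegral (f := u) (μ := μ) (p := 2) two_ne_zero
  calc ∑' i, ‖∫ y, k i y • u y ∂μ‖ₑ ^ 2
      ≤ ∑' i, A * ∫⁻ y, ‖k i y‖ₑ * ‖u y‖ₑ ^ 2 ∂μ := ENNReal.tsum_le_tsum average_sq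
    _ = A * ∫⁻ y, ∑' i, ‖k i y‖ₑ * ‖u y‖ₑ ^ 2 ∂μ := by
        rw [ENNReal.tsum_mul_left, lintegral_tsum product_measurable]
    _ = A * ∫⁻ y, (∑' i, ‖k i y‖ₑ) * ‖u y‖ₑ ^ 2 ∂μ := by simp_rw [ENNReal.tsum_mul_right]
    _ ≤ A * ∫⁻ y, B * ‖u y‖ₑ ^ 2 ∂μ := by
        gcongr A * ?_
        exact lintegral_mono_ae (hB.mono fun y hy => by gcongr)
    _ = A * B * eLpNorm u 2 μ ^ 2 := by
        rw [lintegral_const_mul'' _ (hu.enorm.pow_const 2), sq_eLpNorm, mul_assoc]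

lemma tsum_mul_measure_le_lintegral [Countable ι] {s : ι → Set α} {a : ι → ℝ≥0∞} {g : α → ℝ≥0∞}
    (hs : ∀ i, MeasurableSet (s i)) (disj : Pairwise (Function.onFun Disjoint s))
    (hg : ∀ i, ∀ x ∈ s i, a i ≤ g x) :
    ∑' i, a i * μ (s i) ≤ ∫⁻ x, g x ∂μ :=
  calc ∑' i, a i * μ (s i)
      = ∑' i, ∫⁻ _ in s i, a i ∂μ := by simp only [setLIntegral_const]
    _ ≤ ∑' i, ∫⁻ x in s i, g x ∂μ :=
        ENNReal.tsum_le_tsum fun i => setLIntegral_mono' (hs i) (hg i)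
    _ = ∫⁻ x in ⋃ i, s i, g x ∂μ := (lintegral_iUnion hs disj g).symm
    _ ≤ ∫⁻ x, g x ∂μ := setLIntegral_le_lintegral _ _

end Averages

section HeatKernel

variable {E : Type*} [NormedAddCommGroup E] [InnerProductSpace ℝ E]

/-- The heat kernel `(4πt)^{-n/2} e^{-|x|²/(4t)}` of an `n`-dimensional Euclidean space, whose
convolution with an initial datum is the heat solution at time `t`. -/
def heatKernel (t : ℝ) (x : E) : ℝ :=
  (4 * Real.pi * t) ^ (-(Module.finrank ℝ E : ℝ) / 2) * Real.exp (-‖x‖ ^ 2 / (4 * t))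

lemma continuous_heatKernel (t : ℝ) : Continuous (heatKernel t : E → ℝ) := by
  unfold heatKernel
  fun_prop

lemma heatKernel_nonneg {t : ℝ} (ht : 0 ≤ t) (x : E) : 0 ≤ heatKernel t x := by
  unfold heatKernel
  positivity

variable (E) in
/-- The constant of the Harnack inequality `heatKernel_le_heatKernel_two_mul`. -/
def heatHarnackConst : ℝ :=
  Real.exp (1 / 4) * 2 ^ ((Module.finrank ℝ E : ℝ) / 2)

variable (E) in
lemma heatHarnackConst_pos : 0 < heatHarnackConst E := by
  unfold heatHarnackConst
  positivity

/-- A parabolic Harnack inequality: doubling the time absorbs a displacement of order `√t`. -/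
lemma heatKernel_le_heatKernel_two_mul {t : ℝ} (ht : 0 < t) {x y : E} (hxy : ‖y - x‖ ^ 2 ≤ t) :
    heatKernel t x ≤ heatHarnackConst E * heatKernel (2 * t) y := by
  have norm_sq_le : ‖y‖ ^ 2 ≤ 2 * (‖x‖ ^ 2 + t) :=
    calc ‖y‖ ^ 2 ≤ (‖x‖ + ‖y - x‖) ^ 2 := by gcongr; exact norm_le_norm_add_norm_sub' y x
      _ ≤ 2 * (‖x‖ ^ 2 + ‖y - x‖ ^ 2) := add_sq_le
      _ ≤ 2 * (‖x‖ ^ 2 + t) := by gcongr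
  have exp_le :
      Real.exp (-‖x‖ ^ 2 / (4 * t)) ≤ Real.exp (1 / 4) * Real.exp (-‖y‖ ^ 2 / (4 * (2 * t))) := by
    rw [← Real.exp_add, Real.exp_le_exp, div_add_div _ _ (by norm_num) (by positivity),
      div_le_div_iff₀ (by positivity) (by positivity)]
    nlinarith
  have rpow_two_mul : (4 * Real.pi * t) ^ (-(Module.finrank ℝ E : ℝ) / 2) =
      2 ^ ((Module.finrank ℝ E : ℝ) / 2) *
        (4 * Real.pi * (2 * t)) ^ (-(Module.finrank ℝ E : ℝ) / 2) := by
    rw [mul_left_comm _ 2 t, Real.mul_rpow two_pos.le (by positivity), ← mul_assoc,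
      ← Real.rpow_add two_pos, neg_div, add_neg_cancel, Real.rpow_zero, one_mul]
  calc heatKernel t x
      ≤ (4 * Real.pi * t) ^ (-(Module.finrank ℝ E : ℝ) / 2) *
          (Real.exp (1 / 4) * Real.exp (-‖y‖ ^ 2 / (4 * (2 * t)))) := by
        unfold heatKernel
        gcongr
    _ = heatHarnackConst E * heatKernel (2 * t) y := by
        rw [rpow_two_mul, heatHarnackConst, heatKernel]
        ring

variable [FiniteDimensional ℝ E] [MeasurableSpace E] [BorelSpace E]

lemma integral_heatKernel {t : ℝ} (ht : 0 < t) : ∫ x : E, heatKernel t x = 1 := by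
  have gaussian : ∫ x : E, Real.exp (-‖x‖ ^ 2 / (4 * t)) =
      (4 * Real.pi * t) ^ ((Module.finrank ℝ E : ℝ) / 2) := by
    convert GaussianFourier.integral_rexp_neg_mul_sq_norm (V := E) (b := 1 / (4 * t))
      (by positivity) using 2
    · ext x
      ring_nf
    · field_simp
  simp only [heatKernel]
  rw [integral_const_mul, gaussian, ← Real.rpow_add (by positivity), neg_div, neg_add_cancel,
    Real.rpow_zero]

lemma lintegral_enorm_heatKernel {t : ℝ} (ht : 0 < t) : ∫⁻ x : E, ‖heatKernel t x‖ₑ = 1 := by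
  rw [← ofReal_integral_norm_eq_lintegral_enorm
    (integrable_of_integral_eq_one (integral_heatKernel ht))]
  simp only [Real.norm_of_nonneg (heatKernel_nonneg ht.le _), integral_heatKernel ht,
    ENNReal.ofReal_one]

lemma tsum_enorm_heatKernel_sub_mul_volume_ball_le {ι : Type*} [Countable ι] {p : ι → E} {r t : ℝ}
    (ht : 0 < t) (hrt : r ^ 2 ≤ t) (disj : Pairwise (Function.onFun Disjoint fun i => ball (p i) r))
    (y : E) :
    (∑' i, ‖heatKernel t (p i - y)‖ₑ) * volume (ball (0 : E) r) ≤
      ENNReal.ofReal (heatHarnackConst E) := by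
  have harnack (i : ι) (x : E) (hx : x ∈ ball (p i) r) : ‖heatKernel t (p i - y)‖ₑ ≤
      ENNReal.ofReal (heatHarnackConst E) * ‖heatKernel (2 * t) (x - y)‖ₑ := by
    rw [Real.enorm_of_nonneg (heatKernel_nonneg ht.le _),
      Real.enorm_of_nonneg (heatKernel_nonneg (by positivity) _),
      ← ENNReal.ofReal_mul (heatHarnackConst_pos E).le]
    refine ENNReal.ofReal_le_ofReal (heatKernel_le_heatKernel_two_mul ht ?_)
    rw [sub_sub_sub_cancel_right]
    exact (pow_le_pow_left₀ (norm_nonneg _) (mem_ball_iff_norm.1 hx).le 2).trans hrt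
  calc (∑' i, ‖heatKernel t (p i - y)‖ₑ) * volume (ball (0 : E) r)
      = ∑' i, ‖heatKernel t (p i - y)‖ₑ * volume (ball (p i) r) := by
        simp_rw [Measure.addHaar_ball_center, ENNReal.tsum_mul_right]
    _ ≤ ∫⁻ x, ENNReal.ofReal (heatHarnackConst E) * ‖heatKernel (2 * t) (x - y)‖ₑ :=
        tsum_mul_measure_le_lintegral (fun i => measurableSet_ball) disj harnack
    _ = ENNReal.ofReal (heatHarnackConst E) := by
        rw [lintegral_const_mul' _ _ ENNReal.ofReal_ne_top,
          lintegral_sub_right_eq_self (fun x : E => ‖heatKernel (2 * t) x‖ₑ) y,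
          lintegral_enorm_heatKernel (by positivity), mul_one]

variable (E) in
/-- The constant in the bound `∑ᵢ heatKernel t (pᵢ - y) ≤ κ r⁻ⁿ` over the centres `pᵢ` of disjoint
balls of radius `r ≤ √t`. -/
def heatPackingConst : ℝ :=
  heatHarnackConst E / volume.real (ball (0 : E) 1)

variable (E) in
lemma volume_real_unitBall_pos : 0 < volume.real (ball (0 : E) 1) :=
  ENNReal.toReal_pos (measure_ball_pos _ _ one_pos).ne' measure_ball_lt_top.ne

variable (E) in
lemma heatPackingConst_pos : 0 < heatPackingConst E :=
  div_pos (heatHarnackConst_pos E) (volume_real_unitBall_pos E)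

lemma tsum_enorm_heatKernel_sub_le {ι : Type*} [Countable ι] {p : ι → E} {r t : ℝ} (hr : 0 < r)
    (hrt : r ^ 2 ≤ t) (disj : Pairwise (Function.onFun Disjoint fun i => ball (p i) r)) (y : E) :
    ∑' i, ‖heatKernel t (p i - y)‖ₑ ≤
      ENNReal.ofReal (heatPackingConst E / r ^ Module.finrank ℝ E) := by
  have volume_ball : volume (ball (0 : E) r) =
      ENNReal.ofReal (volume.real (ball (0 : E) 1) * r ^ Module.finrank ℝ E) := by
    rw [Measure.addHaar_ball_of_pos _ _ hr, mul_comm, ENNReal.ofReal_mul measureReal_nonneg,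
      ofReal_measureReal measure_ball_lt_top.ne]
  rw [heatPackingConst, div_div,
    ENNReal.ofReal_div_of_pos (mul_pos (volume_real_unitBall_pos E) (by positivity)), ← volume_ball,
    ENNReal.le_div_iff_mul_le (.inl (measure_ball_pos _ _ hr).ne') (.inl measure_ball_lt_top.ne)]
  exact tsum_enorm_heatKernel_sub_mul_volume_ball_le ((pow_pos hr 2).trans_le hrt) hrt disj y

lemma tsum_enorm_integral_heatKernel_sq_le {ι F : Type*} [NormedAddCommGroup F] [NormedSpace ℝ F]
    {p : ι → E} {u₀ : E → F} (hu : AEStronglyMeasurable u₀ volume) {r t : ℝ} (hr : 0 < r)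
    (hrt : r ^ 2 ≤ t) (disj : Pairwise (Function.onFun Disjoint fun i => ball (p i) r)) :
    ∑' i, ‖∫ y, heatKernel t (p i - y) • u₀ y‖ₑ ^ 2 ≤
      ENNReal.ofReal (heatPackingConst E / r ^ Module.finrank ℝ E) * eLpNorm u₀ 2 volume ^ 2 := by
  have : Countable ι :=
    disj.countable_of_isOpen_disjoint (fun _ => isOpen_ball) fun i => nonempty_ball.2 hr
  have mass (i : ι) : ∫⁻ y, ‖heatKernel t (p i - y)‖ₑ ≤ 1 := by
    rw [lintegral_sub_left_eq_self (fun y : E => ‖heatKernel t y‖ₑ) (p i),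
      lintegral_enorm_heatKernel ((pow_pos hr 2).trans_le hrt)]
  have kernel_measurable (i : ι) : AEStronglyMeasurable (fun y => heatKernel t (p i - y)) volume :=
    ((continuous_heatKernel t).comp (continuous_sub_left (p i))).aestronglyMeasurable
  simpa only [one_mul] using tsum_enorm_integral_smul_sq_le kernel_measurable hu mass
    (ae_of_all _ (tsum_enorm_heatKernel_sub_le hr hrt disj))

end HeatKernel

/-- The left side is `r ^ (-n)` for the largest radius `r` with `r ≤ 1 / (2N)` and `r ≤ √T`. -/
lemma one_div_min_pow_le (n : ℕ) {T N : ℝ} (hT : 0 < T) (hN : 0 < N) :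
    1 / min (1 / (2 * N)) √T ^ n ≤
      2 ^ n * ((1 + (T * N ^ 2) ^ ((n : ℝ) / 4)) * T ^ (-(n : ℝ) / 4)) ^ 2 := by
  set a : ℝ := T ^ (-(n : ℝ) / 4) with a_def
  set b : ℝ := N ^ ((n : ℝ) / 2) with b_def
  have ha : 0 ≤ a := by positivity
  have hb : 0 ≤ b := by positivity
  have b_sq : b ^ 2 = N ^ n := by
    rw [b_def, ← Real.rpow_mul_natCast hN.le, ← Real.rpow_natCast]
    congr 1
    push_cast
    ring
  have a_sq : a ^ 2 = 1 / √T ^ n := by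
    rw [a_def, ← Real.rpow_mul_natCast hT.le, Real.sqrt_eq_rpow, ← Real.rpow_mul_natCast hT.le,
      one_div, ← Real.rpow_neg hT.le]
    congr 1
    push_cast
    ring
  have expand : (1 + (T * N ^ 2) ^ ((n : ℝ) / 4)) * a = a + b := by
    rw [Real.mul_rpow hT.le (by positivity), ← Real.rpow_natCast_mul hN.le, one_add_mul,
      mul_right_comm, a_def, ← Real.rpow_add hT, ← add_div, add_neg_cancel, zero_div,
      Real.rpow_zero, one_mul, b_def]
    congr 2
    push_cast
    ring
  rw [expand]
  rcases min_choice (1 / (2 * N)) √T with h | h <;> rw [h]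
  · calc 1 / (1 / (2 * N)) ^ n = 2 ^ n * b ^ 2 := by
          rw [b_sq, ← one_div_pow, one_div_one_div, mul_pow]
      _ ≤ 2 ^ n * (a + b) ^ 2 := by gcongr; exact le_add_of_nonneg_left ha
  · calc 1 / √T ^ n = 1 * a ^ 2 := by rw [a_sq, one_mul]
      _ ≤ 2 ^ n * (a + b) ^ 2 := by
          gcongr
          · exact one_le_pow₀ one_le_two
          · exact le_add_of_nonneg_right hb

theorem statement2_general (E : Type*) [NormedAddCommGroup E] [InnerProductSpace ℝ E]
    [FiniteDimensional ℝ E] [MeasurableSpace E] [BorelSpace E] :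
    ∃ C : ℝ, 0 < C ∧
      ∀ {ι F : Type*} [NormedAddCommGroup F] [NormedSpace ℝ F] (p : ι → E) (u₀ : E → F),
      MemLp u₀ 2 volume → ∀ T N : ℝ, 0 < T → 0 < N →
      Pairwise (fun i j => 1 / N ≤ dist (p i) (p j)) →
        (∑' i, ‖∫ y, heatKernel T (p i - y) • u₀ y‖ₑ ^ 2) ^ (1 / 2 : ℝ) ≤
          ENNReal.ofReal (C * (1 + (T * N ^ 2) ^ ((Module.finrank ℝ E : ℝ) / 4)) *
            T ^ (-(Module.finrank ℝ E : ℝ) / 4) * (eLpNorm u₀ 2 volume).toReal) := by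
  have := heatPackingConst_pos E
  refine ⟨√(heatPackingConst E * 2 ^ Module.finrank ℝ E), by positivity, ?_⟩
  intro ι F _ _ p u₀ hu T N hT hN separated
  set r : ℝ := min (1 / (2 * N)) √T
  have hr : 0 < r := by positivity
  have hrT : r ^ 2 ≤ T := (Real.le_sqrt' hr).1 (min_le_right _ _)
  have disj : Pairwise (Function.onFun Disjoint fun i => ball (p i) r) := fun i j hij =>
    ball_disjoint_ball <|
      calc r + r ≤ 1 / (2 * N) + 1 / (2 * N) := add_le_add (min_le_left _ _) (min_le_left _ _)
        _ = 1 / N := by field_simp; norm_num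
        _ ≤ dist (p i) (p j) := separated hij
  rw [ENNReal.ofReal_mul (by positivity), ENNReal.ofReal_toReal hu.2.ne, one_div,
    ENNReal.rpow_inv_le_iff two_pos, ENNReal.rpow_two, mul_pow,
    ← ENNReal.ofReal_pow (by positivity)]
  refine (tsum_enorm_integral_heatKernel_sq_le hu.1 hr hrT disj).trans ?_
  gcongr
  rw [mul_assoc, mul_pow, Real.sq_sqrt (by positivity), mul_assoc, div_eq_mul_one_div]
  gcongr
  exact one_div_min_pow_le _ hT hN

lemma heatSol_eq_integral_heatKernel (d : ℕ) (u₀ : EuclideanSpace ℝ (Fin d) → ℝ) (t : ℝ)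
    (x : EuclideanSpace ℝ (Fin d)) :
    heatSol d u₀ t x = ∫ y, heatKernel t (x - y) • u₀ y := by
  simp only [heatSol, heatKernel, finrank_euclideanSpace_fin, smul_eq_mul, mul_assoc,
    integral_const_mul]

lemma pairwise_one_div_le_dist_latticePt (d : ℕ) {N : ℝ} (hN : 0 < N) :
    Pairwise fun m n => 1 / N ≤ dist (latticePt d N m) (latticePt d N n) := by
  intro m n hmn
  obtain ⟨j, hj⟩ := Function.ne_iff.1 hmn
  have one_le : (1 : ℝ) ≤ |(m j : ℝ) - n j| := by
    exact_mod_cast Int.one_le_abs (sub_ne_zero.2 hj)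
  calc 1 / N ≤ |(m j : ℝ) - n j| / N := by gcongr
    _ = |(m j : ℝ) / N - n j / N| := by rw [div_sub_div_same, abs_div, abs_of_pos hN]
    _ = ‖(latticePt d N m - latticePt d N n) j‖ := rfl
    _ ≤ dist (latticePt d N m) (latticePt d N n) := by
        rw [dist_eq_norm]
        exact PiLp.norm_apply_le _ j

/-- There is `C = C(d) > 0` such that for every `u₀ ∈ L²(ℝ^d)`, `T > 0`, `N > 0`,
`(Σ_{n ∈ ℤ^d} |u(T, n/N)|²)^{1/2} ≤ C (1 + (TN²)^{d/4}) T^{-d/4} ‖u₀‖`. -/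
theorem statement2 (d : ℕ) (hd : 0 < d) :
    ∃ C : ℝ, 0 < C ∧
      ∀ u₀ : EuclideanSpace ℝ (Fin d) → ℝ, MemLp u₀ 2 volume →
      ∀ T N : ℝ, 0 < T → 0 < N →
        (∑' n : Fin d → ℤ, (‖heatSol d u₀ T (latticePt d N n)‖₊ : ℝ≥0∞) ^ 2) ^ ((1 : ℝ) / 2)
          ≤ ENNReal.ofReal
              (C * (1 + (T * N ^ 2) ^ ((d : ℝ) / 4)) * T ^ (-(d : ℝ) / 4) * l2norm d u₀) := by
  obtain ⟨C, hC, bound⟩ := statement2_general (EuclideanSpace ℝ (Fin d))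
  exact ⟨C, hC, fun u₀ hu T N hT hN => by
    simpa only [← heatSol_eq_integral_heatKernel, finrank_euclideanSpace_fin, enorm_eq_nnnorm,
      l2norm] using bound _ u₀ hu T N hT hN (pairwise_one_div_le_dist_latticePt d hN)⟩
end
end

section
/- Given s > d/2, there is a constant C = C(s,d) > 0 such that for every r > 0 and every continuous f ∈ L²(ℝ^d) with ∫_{ℝ^d} (1+|ξ|²)^s |f̂(ξ)|² dξ < ∞, one has (Σ_{n∈ℤ^d} (sup_{x∈Q_r(rn)} |f(x)|)² )^{1/2} ≤ C (1 + r^{-d/2}) (∫_{ℝ^d} (1+|ξ|²)^s |f̂(ξ)|² dξ)^{1/2}. -/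
open MeasureTheory Filter Topology Metric ENNReal NNReal

noncomputable section

/-!
Let `x n` be a point of the cube around `r n` at which `|f|` is maximal. By Fourier inversion
`∑ |f (x n)|² = (2π)^{-d/2} ∫ P f̂`, where `P` is the exponential sum with frequencies `x n` and
coefficients the conjugates of `f (x n)`, so by weighted Cauchy–Schwarz it suffices to bound
`∫ (1 + |ξ|²)^{-s} |P|²` by `∑ |f (x n)|²`, a large sieve inequality. The weight is dominated by a
superposition of Gaussians `e^{-t|ξ|²}`, `0 < t ≤ 1`, with finite integral because `s > d/2`.
For a Gaussian the integral is a quadratic form with kernel `e^{-|x n - x m|²/(4t)}`, which Schur's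
test bounds by its largest row sum. As `x n` stays within `r` of `r n` in each coordinate, the row
sums are dominated by products of geometric series with ratio `e^{-min(r, 1)}`, that is, by a
multiple of `(1 + r^{-d/2})²`.
-/

section ExponentialSums

open scoped RealInnerProductSpace ComplexConjugate

theorem sum_sum_mul_mul_le_of_row_sum_le {ι : Type*} {S : Finset ι} {E : ι → ι → ℝ} {B : ℝ}
    (u : ι → ℝ) (hE : ∀ n m, 0 ≤ E n m) (hsymm : ∀ n m, E n m = E m n)
    (hB : ∀ n ∈ S, ∑ m ∈ S, E n m ≤ B) :
    ∑ n ∈ S, ∑ m ∈ S, u n * u m * E n m ≤ B * ∑ n ∈ S, u n ^ 2 := by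
  have hterm (n m : ι) : u n * u m * E n m ≤ (u n ^ 2 * E n m + u m ^ 2 * E m n) / 2 := by
    rw [hsymm m n, ← add_mul, mul_div_right_comm]
    exact mul_le_mul_of_nonneg_right (by linarith [two_mul_le_add_sq (u n) (u m)]) (hE n m)
  calc ∑ n ∈ S, ∑ m ∈ S, u n * u m * E n m
      ≤ ∑ n ∈ S, ∑ m ∈ S, (u n ^ 2 * E n m + u m ^ 2 * E m n) / 2 :=
        Finset.sum_le_sum fun n _ ↦ Finset.sum_le_sum fun m _ ↦ hterm n m
    _ = ∑ n ∈ S, u n ^ 2 * ∑ m ∈ S, E n m := by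
        simp only [← Finset.sum_div, Finset.sum_add_distrib]
        rw [Finset.sum_comm (f := fun n m ↦ u m ^ 2 * E m n)]
        simp only [← Finset.mul_sum, add_self_div_two]
    _ ≤ ∑ n ∈ S, u n ^ 2 * B :=
        Finset.sum_le_sum fun n hn ↦ mul_le_mul_of_nonneg_left (hB n hn) (sq_nonneg _)
    _ = B * ∑ n ∈ S, u n ^ 2 := by rw [← Finset.sum_mul, mul_comm]

variable {ι V : Type*} [NormedAddCommGroup V] [InnerProductSpace ℝ V]

/-- The exponential sum with frequencies `x n` and coefficients `a n`, `n ∈ S`: the Fourier-side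
test function against which sampling at the points `x n` is dualized. -/
def expSum (S : Finset ι) (a : ι → ℂ) (x : ι → V) (ξ : V) : ℂ :=
  ∑ n ∈ S, a n * Complex.exp (Complex.I * ⟪x n, ξ⟫)

@[fun_prop]
theorem continuous_expSum (S : Finset ι) (a : ι → ℂ) (x : ι → V) :
    Continuous (expSum S a x) := by
  unfold expSum
  fun_prop

theorem gaussian_mul_norm_expSum_sq (S : Finset ι) (a : ι → ℂ) (x : ι → V) (b : ℝ) (ξ : V) :
    ((Real.exp (-b * ‖ξ‖ ^ 2) * ‖expSum S a x ξ‖ ^ 2 : ℝ) : ℂ) =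
      ∑ n ∈ S, ∑ m ∈ S, a n * conj (a m) *
        Complex.exp (-(b : ℂ) * ‖ξ‖ ^ 2 + Complex.I * ⟪x n - x m, ξ⟫) := by
  rw [Complex.ofReal_mul, Complex.ofReal_pow, ← Complex.mul_conj', expSum, map_sum,
    Finset.sum_mul_sum, Finset.mul_sum]
  refine Finset.sum_congr rfl fun n _ ↦ ?_
  rw [Finset.mul_sum]
  refine Finset.sum_congr rfl fun m _ ↦ ?_
  rw [map_mul, ← Complex.exp_conj, inner_sub_left, Complex.exp_add, Complex.ofReal_sub, mul_sub,
    sub_eq_add_neg, Complex.exp_add]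
  simp only [map_mul, Complex.conj_I, Complex.conj_ofReal, neg_mul]
  push_cast
  ring

variable [FiniteDimensional ℝ V] [MeasurableSpace V] [BorelSpace V]

theorem integrable_gaussian_mul_character {b : ℝ} (hb : 0 < b) (v : V) :
    Integrable fun ξ : V ↦ Complex.exp (-(b : ℂ) * ‖ξ‖ ^ 2 + Complex.I * ⟪v, ξ⟫) :=
  GaussianFourier.integrable_cexp_neg_mul_sq_norm_add (by simpa using hb) Complex.I v

theorem integral_gaussian_mul_character {b : ℝ} (hb : 0 < b) (v : V) :
    ∫ ξ : V, Complex.exp (-(b : ℂ) * ‖ξ‖ ^ 2 + Complex.I * ⟪v, ξ⟫) =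
      ((Real.pi / b) ^ (Module.finrank ℝ V / 2 : ℝ) * Real.exp (-‖v‖ ^ 2 / (4 * b)) : ℝ) := by
  have hpos : 0 < Real.pi / b := by positivity
  rw [GaussianFourier.integral_cexp_neg_mul_sq_norm_add (by simpa using hb), Complex.ofReal_mul,
    Complex.ofReal_cpow hpos.le, Complex.I_sq]
  push_cast
  simp

theorem integrable_gaussian_mul_norm_expSum_sq {b : ℝ} (hb : 0 < b) (S : Finset ι) (a : ι → ℂ)
    (x : ι → V) : Integrable fun ξ ↦ Real.exp (-b * ‖ξ‖ ^ 2) * ‖expSum S a x ξ‖ ^ 2 := by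
  have hcomplex : Integrable fun ξ ↦
      ((Real.exp (-b * ‖ξ‖ ^ 2) * ‖expSum S a x ξ‖ ^ 2 : ℝ) : ℂ) := by
    simp only [gaussian_mul_norm_expSum_sq]
    exact integrable_finsetSum _ fun n _ ↦ integrable_finsetSum _ fun m _ ↦
      (integrable_gaussian_mul_character hb _).const_mul _
  exact hcomplex.re

theorem integral_gaussian_mul_norm_expSum_sq {b : ℝ} (hb : 0 < b) (S : Finset ι) (a : ι → ℂ)
    (x : ι → V) :
    ((∫ ξ, Real.exp (-b * ‖ξ‖ ^ 2) * ‖expSum S a x ξ‖ ^ 2 : ℝ) : ℂ) =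
      ∑ n ∈ S, ∑ m ∈ S, a n * conj (a m) * ((Real.pi / b) ^ (Module.finrank ℝ V / 2 : ℝ) *
        Real.exp (-‖x n - x m‖ ^ 2 / (4 * b)) : ℝ) := by
  have hint (n m : ι) := (integrable_gaussian_mul_character hb (x n - x m)).const_mul
    (a n * conj (a m))
  rw [← integral_complex_ofReal]
  simp only [gaussian_mul_norm_expSum_sq]
  rw [integral_finsetSum _ fun n _ ↦ integrable_finsetSum _ fun m _ ↦ hint n m]
  refine Finset.sum_congr rfl fun n _ ↦ ?_
  rw [integral_finsetSum _ fun m _ ↦ hint n m]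
  simp only [integral_const_mul, integral_gaussian_mul_character hb]

theorem integral_gaussian_mul_norm_expSum_sq_le {b B : ℝ} (hb : 0 < b) {S : Finset ι} (a : ι → ℂ)
    {x : ι → V} (hB : ∀ n ∈ S, ∑ m ∈ S, Real.exp (-‖x n - x m‖ ^ 2 / (4 * b)) ≤ B) :
    ∫ ξ, Real.exp (-b * ‖ξ‖ ^ 2) * ‖expSum S a x ξ‖ ^ 2 ≤
      (Real.pi / b) ^ (Module.finrank ℝ V / 2 : ℝ) * (B * ∑ n ∈ S, ‖a n‖ ^ 2) := by
  set G : ℝ := (Real.pi / b) ^ (Module.finrank ℝ V / 2 : ℝ) with hG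
  have hG0 : 0 ≤ G := by positivity
  calc ∫ ξ, Real.exp (-b * ‖ξ‖ ^ 2) * ‖expSum S a x ξ‖ ^ 2
      ≤ ‖((∫ ξ, Real.exp (-b * ‖ξ‖ ^ 2) * ‖expSum S a x ξ‖ ^ 2 : ℝ) : ℂ)‖ := by
        rw [Complex.norm_real]
        exact Real.le_norm_self _
    _ ≤ ∑ n ∈ S, ∑ m ∈ S, G * (‖a n‖ * ‖a m‖ * Real.exp (-‖x n - x m‖ ^ 2 / (4 * b))) := by
        rw [integral_gaussian_mul_norm_expSum_sq hb, ← hG]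
        refine norm_sum_le_of_le _ fun n _ ↦ norm_sum_le_of_le _ fun m _ ↦ le_of_eq ?_
        rw [norm_mul, norm_mul, RCLike.norm_conj, Complex.norm_of_nonneg (by positivity)]
        ring
    _ = G * ∑ n ∈ S, ∑ m ∈ S, ‖a n‖ * ‖a m‖ * Real.exp (-‖x n - x m‖ ^ 2 / (4 * b)) := by
        simp only [Finset.mul_sum]
    _ ≤ G * (B * ∑ n ∈ S, ‖a n‖ ^ 2) :=
        mul_le_mul_of_nonneg_left (sum_sum_mul_mul_le_of_row_sum_le _
          (fun _ _ ↦ (Real.exp_pos _).le) (fun n m ↦ by rw [norm_sub_rev]) hB) hG0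

end ExponentialSums

section LargeSieve

theorem lintegral_Ioc_rpow {p τ : ℝ} (hp : -1 < p) (hτ : 0 ≤ τ) :
    ∫⁻ t in Set.Ioc 0 τ, ENNReal.ofReal (t ^ p) = ENNReal.ofReal (τ ^ (p + 1) / (p + 1)) := by
  have hint : IntegrableOn (fun t : ℝ ↦ t ^ p) (Set.Ioc 0 τ) :=
    (intervalIntegrable_iff_integrableOn_Ioc_of_le hτ).1
      (intervalIntegral.intervalIntegrable_rpow' hp)
  have hnonneg : 0 ≤ᵐ[volume.restrict (Set.Ioc 0 τ)] fun t : ℝ ↦ t ^ p :=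
    (ae_restrict_mem measurableSet_Ioc).mono fun t ht ↦ Real.rpow_nonneg ht.1.le p
  rw [← ofReal_integral_eq_lintegral_ofReal hint hnonneg,
    ← intervalIntegral.integral_of_le hτ, integral_rpow (Or.inl hp),
    Real.zero_rpow (by linarith), sub_zero]

/-- A one-sided form of `(1 + u)⁻ˢ Γ(s) = ∫ tˢ⁻¹ e^{-t(1+u)} dt`: on `t ≤ 1 / (1 + u)` the
exponential is at least `e⁻¹`, so nothing beyond `t ≤ 1` is needed for an upper bound. -/
theorem one_add_rpow_neg_le_lintegral {s u : ℝ} (hs : 0 < s) (hu : 0 ≤ u) :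
    ENNReal.ofReal ((1 + u) ^ (-s)) ≤ ENNReal.ofReal (s * Real.exp 1) *
      ∫⁻ t in Set.Ioc (0 : ℝ) 1, ENNReal.ofReal (t ^ (s - 1) * Real.exp (-t * u)) := by
  set τ : ℝ := (1 + u)⁻¹
  have hτ : 0 ≤ τ := by positivity
  have hτ1 : τ ≤ 1 := inv_le_one_of_one_le₀ (by linarith)
  have hexponent : ∀ t ∈ Set.Ioc 0 τ, -1 ≤ -t * u := fun t ht ↦ by
    have : t * (1 + u) ≤ 1 := (le_inv_mul_iff₀' (by positivity)).1 (by simpa using ht.2)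
    linarith [ht.1]
  calc ENNReal.ofReal ((1 + u) ^ (-s))
      = ENNReal.ofReal (s * Real.exp 1) *
          (ENNReal.ofReal (Real.exp (-1)) * ENNReal.ofReal (τ ^ (s - 1 + 1) / (s - 1 + 1))) := by
        rw [← ENNReal.ofReal_mul (by positivity), ← ENNReal.ofReal_mul (by positivity),
          sub_add_cancel, Real.exp_neg, Real.inv_rpow (by positivity),
          Real.rpow_neg (by positivity)]
        field_simp
    _ = ENNReal.ofReal (s * Real.exp 1) *
          ∫⁻ t in Set.Ioc 0 τ, ENNReal.ofReal (Real.exp (-1)) * ENNReal.ofReal (t ^ (s - 1)) := by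
        rw [lintegral_const_mul' _ _ ENNReal.ofReal_ne_top, lintegral_Ioc_rpow (by linarith) hτ]
    _ ≤ ENNReal.ofReal (s * Real.exp 1) *
          ∫⁻ t in Set.Ioc 0 τ, ENNReal.ofReal (t ^ (s - 1) * Real.exp (-t * u)) := by
        refine mul_le_mul_right (setLIntegral_mono' measurableSet_Ioc fun t ht ↦ ?_) _
        rw [← ENNReal.ofReal_mul (by positivity), mul_comm]
        gcongr
        · exact Real.rpow_nonneg ht.1.le _
        · exact hexponent t ht
    _ ≤ _ := by gcongr

/-- The constant of the large sieve inequality `lintegral_rpow_neg_mul_norm_expSum_sq_le` in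
dimension `d` for the weight `(1 + ‖ξ‖ ^ 2) ^ (-s)`, `d / 2 < s`. -/
def sieveConst (d : ℕ) (s : ℝ) : ℝ :=
  s * Real.exp 1 * Real.pi ^ (d / 2 : ℝ) / (s - d / 2)

theorem sieveConst_pos {d : ℕ} {s : ℝ} (hs : (d : ℝ) / 2 < s) : 0 < sieveConst d s := by
  have hs0 : 0 < s := lt_of_le_of_lt (by positivity) hs
  have : 0 < s - d / 2 := sub_pos.2 hs
  unfold sieveConst
  positivity

variable {ι V : Type*} [NormedAddCommGroup V] [InnerProductSpace ℝ V]

theorem continuous_rpow_neg_mul_norm_expSum_sq (s : ℝ) (S : Finset ι) (a : ι → ℂ)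
    (x : ι → V) : Continuous fun ξ ↦ (1 + ‖ξ‖ ^ 2) ^ (-s) * ‖expSum S a x ξ‖ ^ 2 :=
  (Continuous.rpow_const (by fun_prop) fun ξ ↦ Or.inl (by positivity)).mul (by fun_prop)

variable [FiniteDimensional ℝ V] [MeasurableSpace V] [BorelSpace V]

theorem lintegral_gaussian_mul_norm_expSum_sq_le {t B : ℝ} (ht : t ∈ Set.Ioc (0 : ℝ) 1)
    {S : Finset ι} (a : ι → ℂ) {x : ι → V}
    (hB : ∀ n ∈ S, ∑ m ∈ S, Real.exp (-‖x n - x m‖ ^ 2 / 4) ≤ B) :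
    ∫⁻ ξ, ENNReal.ofReal (Real.exp (-t * ‖ξ‖ ^ 2) * ‖expSum S a x ξ‖ ^ 2) ≤
      ENNReal.ofReal (Real.pi ^ (Module.finrank ℝ V / 2 : ℝ) * (B * ∑ n ∈ S, ‖a n‖ ^ 2) *
        t ^ (-(Module.finrank ℝ V / 2 : ℝ))) := by
  have hB' : ∀ n ∈ S, ∑ m ∈ S, Real.exp (-‖x n - x m‖ ^ 2 / (4 * t)) ≤ B := fun n hn ↦ by
    refine (Finset.sum_le_sum fun m _ ↦ Real.exp_le_exp.2 ?_).trans (hB n hn)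
    rw [neg_div, neg_div, neg_le_neg_iff]
    exact div_le_div_of_nonneg_left (by positivity) (by linarith [ht.1]) (by linarith [ht.2])
  rw [← ofReal_integral_eq_lintegral_ofReal (integrable_gaussian_mul_norm_expSum_sq ht.1 S a x)
    (ae_of_all _ fun ξ ↦ by positivity)]
  refine ENNReal.ofReal_le_ofReal
    ((integral_gaussian_mul_norm_expSum_sq_le ht.1 a hB').trans_eq ?_)
  rw [Real.div_rpow Real.pi_pos.le ht.1.le, Real.rpow_neg ht.1.le]
  ring

/-- The weight is a superposition of the Gaussians `e^{-t‖ξ‖²}`, `0 < t ≤ 1`, each of which only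
sees correlations of the frequencies at distance `√t ≤ 1`. -/
theorem lintegral_rpow_neg_mul_norm_expSum_sq_le {s B : ℝ}
    (hs : (Module.finrank ℝ V : ℝ) / 2 < s) {S : Finset ι} (a : ι → ℂ) {x : ι → V}
    (hB : ∀ n ∈ S, ∑ m ∈ S, Real.exp (-‖x n - x m‖ ^ 2 / 4) ≤ B) (hB0 : 0 ≤ B) :
    ∫⁻ ξ, ENNReal.ofReal ((1 + ‖ξ‖ ^ 2) ^ (-s) * ‖expSum S a x ξ‖ ^ 2) ≤
      ENNReal.ofReal (sieveConst (Module.finrank ℝ V) s * (B * ∑ n ∈ S, ‖a n‖ ^ 2)) := by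
  set d : ℕ := Module.finrank ℝ V
  set Y : ℝ := B * ∑ n ∈ S, ‖a n‖ ^ 2
  have hs0 : 0 < s := lt_of_le_of_lt (by positivity) hs
  have : 0 ≤ Y := by positivity
  calc ∫⁻ ξ, ENNReal.ofReal ((1 + ‖ξ‖ ^ 2) ^ (-s) * ‖expSum S a x ξ‖ ^ 2)
      ≤ ∫⁻ ξ, ENNReal.ofReal (s * Real.exp 1) * ∫⁻ t in Set.Ioc (0 : ℝ) 1,
          ENNReal.ofReal (t ^ (s - 1)) *
            ENNReal.ofReal (Real.exp (-t * ‖ξ‖ ^ 2) * ‖expSum S a x ξ‖ ^ 2) := by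
        refine lintegral_mono fun ξ ↦ ?_
        rw [ENNReal.ofReal_mul (by positivity)]
        refine (mul_le_mul_left (one_add_rpow_neg_le_lintegral hs0 (sq_nonneg ‖ξ‖)) _).trans_eq ?_
        rw [mul_assoc, ← lintegral_mul_const' _ _ ENNReal.ofReal_ne_top]
        congr 1
        refine setLIntegral_congr_fun measurableSet_Ioc fun t ht ↦ ?_
        have : 0 ≤ t ^ (s - 1) := Real.rpow_nonneg ht.1.le _
        rw [← ENNReal.ofReal_mul (by positivity), ← ENNReal.ofReal_mul this, mul_assoc]
    _ = ENNReal.ofReal (s * Real.exp 1) * ∫⁻ t in Set.Ioc (0 : ℝ) 1, ENNReal.ofReal (t ^ (s - 1)) *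
          ∫⁻ ξ, ENNReal.ofReal (Real.exp (-t * ‖ξ‖ ^ 2) * ‖expSum S a x ξ‖ ^ 2) := by
        rw [lintegral_const_mul' _ _ ENNReal.ofReal_ne_top, lintegral_lintegral_swap]
        · simp only [lintegral_const_mul' _ _ ENNReal.ofReal_ne_top]
        · fun_prop
    _ ≤ ENNReal.ofReal (s * Real.exp 1) * ∫⁻ t in Set.Ioc (0 : ℝ) 1,
          ENNReal.ofReal (Real.pi ^ (d / 2 : ℝ) * Y) * ENNReal.ofReal (t ^ (s - d / 2 - 1)) := by
        refine mul_le_mul_right (setLIntegral_mono' measurableSet_Ioc fun t ht ↦ ?_) _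
        refine (mul_le_mul_right (lintegral_gaussian_mul_norm_expSum_sq_le ht a hB) _).trans_eq ?_
        rw [← ENNReal.ofReal_mul (Real.rpow_nonneg ht.1.le _), ← ENNReal.ofReal_mul (by positivity),
          sub_right_comm, sub_eq_add_neg (s - 1), Real.rpow_add ht.1]
        congr 1
        ring
    _ = ENNReal.ofReal (sieveConst d s * Y) := by
        rw [lintegral_const_mul' _ _ ENNReal.ofReal_ne_top, lintegral_Ioc_rpow (by linarith)
          zero_le_one, ← ENNReal.ofReal_mul (by positivity), ← ENNReal.ofReal_mul (by positivity),
          sub_add_cancel, Real.one_rpow, sieveConst]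
        congr 1
        ring

theorem integrable_rpow_neg_mul_norm_expSum_sq {s : ℝ}
    (hs : (Module.finrank ℝ V : ℝ) / 2 < s) (S : Finset ι) (a : ι → ℂ) (x : ι → V) :
    Integrable fun ξ ↦ (1 + ‖ξ‖ ^ 2) ^ (-s) * ‖expSum S a x ξ‖ ^ 2 := by
  have hB : ∀ n ∈ S, ∑ m ∈ S, Real.exp (-‖x n - x m‖ ^ 2 / 4) ≤ S.card := fun n _ ↦ by
    simpa using S.sum_le_card_nsmul _ 1 fun m _ ↦ Real.exp_le_one_iff.2
      (div_nonpos_of_nonpos_of_nonneg (neg_nonpos.2 (sq_nonneg ‖x n - x m‖)) zero_le_four)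
  refine ⟨(continuous_rpow_neg_mul_norm_expSum_sq s S a x).aestronglyMeasurable, ?_⟩
  rw [hasFiniteIntegral_iff_ofReal (ae_of_all _ fun ξ ↦ by positivity)]
  exact (lintegral_rpow_neg_mul_norm_expSum_sq_le hs a hB S.card.cast_nonneg).trans_lt
    ENNReal.ofReal_lt_top

theorem integral_rpow_neg_mul_norm_expSum_sq_le {s B : ℝ}
    (hs : (Module.finrank ℝ V : ℝ) / 2 < s) {S : Finset ι} (a : ι → ℂ) {x : ι → V}
    (hB : ∀ n ∈ S, ∑ m ∈ S, Real.exp (-‖x n - x m‖ ^ 2 / 4) ≤ B) (hB0 : 0 ≤ B) :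
    ∫ ξ, (1 + ‖ξ‖ ^ 2) ^ (-s) * ‖expSum S a x ξ‖ ^ 2 ≤
      sieveConst (Module.finrank ℝ V) s * (B * ∑ n ∈ S, ‖a n‖ ^ 2) := by
  have := sieveConst_pos hs
  rw [integral_eq_lintegral_of_nonneg_ae (ae_of_all _ fun ξ ↦ by positivity)
    (continuous_rpow_neg_mul_norm_expSum_sq s S a x).aestronglyMeasurable]
  exact ENNReal.toReal_le_of_le_ofReal (by positivity)
    (lintegral_rpow_neg_mul_norm_expSum_sq_le hs a hB hB0)

end LargeSieve

section Sampling

open scoped RealInnerProductSpace ComplexConjugate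

variable {ι V : Type*} [NormedAddCommGroup V] [InnerProductSpace ℝ V] [FiniteDimensional ℝ V]
  [MeasurableSpace V] [BorelSpace V]

theorem integrable_of_integrable_rpow_mul_norm_sq {E : Type*} [NormedAddCommGroup E] {s : ℝ}
    (hs : (Module.finrank ℝ V : ℝ) / 2 < s) {F : V → E} (hF : AEStronglyMeasurable F)
    (hA : Integrable fun ξ ↦ (1 + ‖ξ‖ ^ 2) ^ s * ‖F ξ‖ ^ 2) : Integrable F := by
  have hweight : Integrable fun ξ : V ↦ (1 + ‖ξ‖ ^ 2) ^ (-(2 * s) / 2) :=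
    integrable_rpow_neg_one_add_norm_sq (by linarith)
  refine (hA.add hweight).mono' hF (ae_of_all _ fun ξ ↦ ?_)
  have hw : 0 < (1 + ‖ξ‖ ^ 2) ^ s := by positivity
  have hamgm := two_mul_le_add_mul_sq (a := ‖F ξ‖) (b := 1) hw
  rw [← Real.rpow_neg (by positivity)] at hamgm
  rw [Pi.add_apply, neg_div, mul_div_cancel_left₀ s two_ne_zero]
  linarith [norm_nonneg (F ξ)]

theorem integral_expSum_mul (S : Finset ι) (a : ι → ℂ) (x : ι → V) {F : V → ℂ}
    (hF : Integrable F) : ∫ ξ, expSum S a x ξ * F ξ =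
      ∑ n ∈ S, a n * ∫ ξ, Complex.exp (Complex.I * ⟪x n, ξ⟫) * F ξ := by
  have hint (n : ι) : Integrable fun ξ ↦ a n * (Complex.exp (Complex.I * ⟪x n, ξ⟫) * F ξ) := by
    refine (hF.bdd_mul (c := 1) ?_ (ae_of_all _ fun ξ ↦ ?_)).const_mul _
    · exact Continuous.aestronglyMeasurable (by fun_prop)
    · rw [mul_comm, Complex.norm_exp_ofReal_mul_I]
  simp only [expSum, Finset.sum_mul, mul_assoc]
  rw [integral_finsetSum _ fun n _ ↦ hint n]
  simp only [integral_const_mul]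

theorem two_mul_norm_integral_expSum_mul_le {s B ε : ℝ} (hs : (Module.finrank ℝ V : ℝ) / 2 < s)
    {F : V → ℂ} (hA : Integrable fun ξ ↦ (1 + ‖ξ‖ ^ 2) ^ s * ‖F ξ‖ ^ 2) {S : Finset ι}
    (a : ι → ℂ) {x : ι → V} (hB : ∀ n ∈ S, ∑ m ∈ S, Real.exp (-‖x n - x m‖ ^ 2 / 4) ≤ B)
    (hB0 : 0 ≤ B) (hε : 0 < ε) :
    2 * ‖∫ ξ, expSum S a x ξ * F ξ‖ ≤ ε * (∫ ξ, (1 + ‖ξ‖ ^ 2) ^ s * ‖F ξ‖ ^ 2) +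
      ε⁻¹ * (sieveConst (Module.finrank ℝ V) s * (B * ∑ n ∈ S, ‖a n‖ ^ 2)) := by
  have hP := integrable_rpow_neg_mul_norm_expSum_sq hs S a x
  calc 2 * ‖∫ ξ, expSum S a x ξ * F ξ‖ = ‖∫ ξ, 2 * (expSum S a x ξ * F ξ)‖ := by
        rw [integral_const_mul, norm_mul, Complex.norm_ofNat]
    _ ≤ ∫ ξ, ε * ((1 + ‖ξ‖ ^ 2) ^ s * ‖F ξ‖ ^ 2) +
          ε⁻¹ * ((1 + ‖ξ‖ ^ 2) ^ (-s) * ‖expSum S a x ξ‖ ^ 2) := by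
        refine norm_integral_le_of_norm_le ((hA.const_mul _).add (hP.const_mul _))
          (ae_of_all _ fun ξ ↦ ?_)
        have hw : 0 < ε * (1 + ‖ξ‖ ^ 2) ^ s := by positivity
        rw [norm_mul, norm_mul, Complex.norm_ofNat, mul_comm ‖expSum S a x ξ‖, ← mul_assoc,
          ← mul_assoc, ← mul_assoc, Real.rpow_neg (by positivity), ← mul_inv]
        exact two_mul_le_add_mul_sq hw
    _ = ε * (∫ ξ, (1 + ‖ξ‖ ^ 2) ^ s * ‖F ξ‖ ^ 2) +
          ε⁻¹ * ∫ ξ, (1 + ‖ξ‖ ^ 2) ^ (-s) * ‖expSum S a x ξ‖ ^ 2 := by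
        rw [integral_add (hA.const_mul _) (hP.const_mul _), integral_const_mul, integral_const_mul]
    _ ≤ _ := by
        gcongr
        exact integral_rpow_neg_mul_norm_expSum_sq_le hs a hB hB0

theorem sum_norm_integral_character_mul_sq_le {s B : ℝ} (hs : (Module.finrank ℝ V : ℝ) / 2 < s)
    {F : V → ℂ} (hF : AEStronglyMeasurable F)
    (hA : Integrable fun ξ ↦ (1 + ‖ξ‖ ^ 2) ^ s * ‖F ξ‖ ^ 2) {S : Finset ι} {x : ι → V}
    (hB : ∀ n ∈ S, ∑ m ∈ S, Real.exp (-‖x n - x m‖ ^ 2 / 4) ≤ B) (hB0 : 0 < B) :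
    ∑ n ∈ S, ‖∫ ξ, Complex.exp (Complex.I * ⟪x n, ξ⟫) * F ξ‖ ^ 2 ≤
      sieveConst (Module.finrank ℝ V) s * B * ∫ ξ, (1 + ‖ξ‖ ^ 2) ^ s * ‖F ξ‖ ^ 2 := by
  set u : ι → ℂ := fun n ↦ ∫ ξ, Complex.exp (Complex.I * ⟪x n, ξ⟫) * F ξ
  set X : ℝ := ∑ n ∈ S, ‖u n‖ ^ 2 with hX
  have hD := sieveConst_pos hs
  have hself : ∫ ξ, expSum S (fun n ↦ conj (u n)) x ξ * F ξ = X := by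
    rw [integral_expSum_mul S _ x (integrable_of_integrable_rpow_mul_norm_sq hs hF hA), hX]
    push_cast
    exact Finset.sum_congr rfl fun n _ ↦ Complex.conj_mul' (u n)
  have hdual := two_mul_norm_integral_expSum_mul_le hs hA (fun n ↦ conj (u n)) hB hB0.le
    (mul_pos hD hB0)
  simp only [hself, RCLike.norm_conj, ← hX] at hdual
  rw [Complex.norm_of_nonneg (by positivity), ← mul_assoc _ B X,
    inv_mul_cancel_left₀ (by positivity)] at hdual
  linarith

end Sampling

section FourierInversion

open scoped FourierTransform ContDiff SchwartzMap

theorem tendsto_integral_smul_of_tendsto_eLpNorm {α ι 𝕜 E : Type*} [MeasurableSpace α]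
    {μ : Measure α} [RCLike 𝕜] [NormedAddCommGroup E] [NormedSpace ℝ E] [NormedSpace 𝕜 E]
    {l : Filter ι} {p q : ℝ≥0∞} [ENNReal.HolderTriple p q 1] {θ : α → 𝕜} {g : α → E}
    {T : ι → α → E} (hθ : MemLp θ p μ) (hg : MemLp g q μ)
    (hT : ∀ i, AEStronglyMeasurable (T i) μ)
    (hlim : Tendsto (fun i ↦ eLpNorm (fun ξ ↦ g ξ - T i ξ) q μ) l (𝓝 0)) :
    Tendsto (fun i ↦ ∫ ξ, θ ξ • T i ξ ∂μ) l (𝓝 (∫ ξ, θ ξ • g ξ ∂μ)) := by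
  have hdiff (i : ι) : AEStronglyMeasurable (g - T i) μ := hg.1.sub (hT i)
  refine tendsto_integral_of_L1' _ (hθ.1.smul hg.1) ?_ ?_
  · filter_upwards [hlim.eventually (gt_mem_nhds ENNReal.zero_lt_top)] with i hi
    have hTi : MemLp (T i) q μ := by
      simpa using hg.sub (⟨hdiff i, hi⟩ : MemLp (g - T i) q μ)
    exact memLp_one_iff_integrable.1 (hTi.smul hθ)
  · refine tendsto_of_tendsto_of_tendsto_of_le_of_le tendsto_const_nhds
      (by simpa using ENNReal.Tendsto.const_mul hlim (Or.inr hθ.2.ne)) (fun _ ↦ zero_le)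
      fun i ↦ ?_
    have hsub : (fun ξ ↦ θ ξ • T i ξ) - θ • g = -(θ • (g - T i)) := by
      ext ξ
      simp [smul_sub]
    rw [hsub, eLpNorm_neg]
    exact eLpNorm_smul_le_mul_eLpNorm (hdiff i) hθ.1

variable {V E : Type*} [NormedAddCommGroup V] [InnerProductSpace ℝ V] [FiniteDimensional ℝ V]
  [MeasurableSpace V] [BorelSpace V] [NormedAddCommGroup E]

theorem integrable_indicator_closedBall {f : V → E} (hf : Continuous f) (R : ℝ) :
    Integrable ((closedBall (0 : V) R).indicator f) :=
  (hf.continuousOn.integrableOn_compact (isCompact_closedBall 0 R)).integrable_indicator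
    measurableSet_closedBall

variable [NormedSpace ℂ E]

theorem continuous_fourier {f : V → E} (hf : Integrable f) : Continuous (𝓕 f) :=
  VectorFourier.fourierIntegral_continuous Real.continuous_fourierChar continuous_inner hf

theorem continuous_fourierInv {f : V → E} (hf : Integrable f) : Continuous (𝓕⁻ f) := by
  rw [Real.fourierInv_eq_fourier_comp_neg]
  exact continuous_fourier hf.comp_neg

theorem integral_fourier_smul_eq [CompleteSpace E] {f : V → ℂ} {g : V → E} (hf : Integrable f)
    (hg : Integrable g) : ∫ ξ, 𝓕 f ξ • g ξ = ∫ x, f x • 𝓕 g x := by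
  have hflip := VectorFourier.integral_fourierIntegral_smul_eq_flip (L := innerₗ V)
    Real.continuous_fourierChar continuous_inner hf hg
  rwa [flip_innerₗ] at hflip

theorem integral_fourierInv_smul_eq [CompleteSpace E] {f : V → ℂ} {g : V → E} (hf : Integrable f)
    (hg : Integrable g) : ∫ ξ, 𝓕⁻ f ξ • g ξ = ∫ x, f x • 𝓕⁻ g x := by
  rw [Real.fourierInv_eq_fourier_comp_neg, integral_fourier_smul_eq hf.comp_neg hg,
    ← integral_neg_eq_self]
  simp only [neg_neg, Real.fourierInv_eq_fourier_neg]

theorem tendsto_integral_fourierInv_smul_fourier_indicator [CompleteSpace E] {f : V → E}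
    (hf : Continuous f) {φ : 𝓢(V, ℂ)} (hφ : HasCompactSupport φ) :
    Tendsto (fun R : ℝ ↦ ∫ ξ, (𝓕⁻ φ) ξ • 𝓕 ((closedBall 0 R).indicator f) ξ) atTop
      (𝓝 (∫ x, φ x • f x)) := by
  have hball (R : ℝ) : ∫ ξ, (𝓕⁻ φ) ξ • 𝓕 ((closedBall 0 R).indicator f) ξ =
      ∫ x in closedBall 0 R, φ x • f x := by
    rw [← integral_fourier_smul_eq (𝓕⁻ φ).integrable (integrable_indicator_closedBall hf R),
      ← SchwartzMap.fourier_coe, FourierTransform.fourier_fourierInv_eq,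
      ← integral_indicator measurableSet_closedBall]
    simp only [Set.indicator_smul_apply]
  simp only [hball]
  exact (aecover_closedBall tendsto_id).integral_tendsto_of_countably_generated
    ((φ.continuous.smul hf).integrable_of_hasCompactSupport hφ.smul_right)

theorem integral_smul_eq_integral_smul_fourierInv [CompleteSpace E] {f g : V → E}
    (hf : Continuous f) (hg : Integrable g) (hg2 : MemLp g 2)
    (hlim : Tendsto (fun R : ℝ ↦
      eLpNorm (fun ξ ↦ g ξ - 𝓕 ((closedBall 0 R).indicator f) ξ) 2) atTop (𝓝 0))
    {φ : 𝓢(V, ℂ)} (hφ : HasCompactSupport φ) :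
    ∫ x, φ x • f x = ∫ x, φ x • 𝓕⁻ g x := by
  have hT (R : ℝ) : AEStronglyMeasurable (𝓕 ((closedBall (0 : V) R).indicator f)) :=
    (continuous_fourier (integrable_indicator_closedBall hf R)).aestronglyMeasurable
  calc ∫ x, φ x • f x = ∫ ξ, (𝓕⁻ φ) ξ • g ξ :=
        tendsto_nhds_unique (tendsto_integral_fourierInv_smul_fourier_indicator hf hφ)
          (tendsto_integral_smul_of_tendsto_eLpNorm ((𝓕⁻ φ).memLp 2) hg2 hT hlim)
    _ = ∫ x, φ x • 𝓕⁻ g x := by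
        rw [SchwartzMap.fourierInv_coe, integral_fourierInv_smul_eq φ.integrable hg]

theorem eq_fourierInv_of_tendsto_eLpNorm [CompleteSpace E] {f g : V → E} (hf : Continuous f)
    (hg : Integrable g) (hg2 : MemLp g 2)
    (hlim : Tendsto (fun R : ℝ ↦
      eLpNorm (fun ξ ↦ g ξ - 𝓕 ((closedBall 0 R).indicator f) ξ) 2) atTop (𝓝 0)) :
    f = 𝓕⁻ g := by
  have hgc : Continuous (𝓕⁻ g) := continuous_fourierInv hg
  rw [← hf.ae_eq_iff_eq volume hgc]
  refine ae_eq_of_integral_contDiff_smul_eq hf.locallyIntegrable hgc.locallyIntegrable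
    fun φ hφ hsupp ↦ ?_
  have hsupp' : HasCompactSupport fun x ↦ (φ x : ℂ) := hsupp.comp_left Complex.ofReal_zero
  exact integral_smul_eq_integral_smul_fourierInv hf hg hg2 hlim
    (φ := hsupp'.toSchwartzMap (Complex.ofRealCLM.contDiff.comp hφ)) hsupp'

end FourierInversion

section L2FourierInversion

open scoped FourierTransform RealInnerProductSpace

theorem eLpNorm_comp_smul {V E : Type*} [NormedAddCommGroup V] [NormedSpace ℝ V]
    [FiniteDimensional ℝ V] [MeasurableSpace V] [BorelSpace V] [NormedAddCommGroup E]
    (μ : Measure V) [μ.IsAddHaarMeasure] {c : ℝ} (hc : c ≠ 0) (f : V → E) (p : ℝ≥0∞) :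
    eLpNorm (fun x ↦ f (c • x)) p μ =
      ENNReal.ofReal |(c ^ Module.finrank ℝ V)⁻¹| ^ (1 / p).toReal * eLpNorm f p μ := by
  have hne : ENNReal.ofReal |(c ^ Module.finrank ℝ V)⁻¹| ≠ 0 :=
    (ENNReal.ofReal_pos.2 (by positivity)).ne'
  rw [← smul_eq_mul, ← eLpNorm_smul_measure_of_ne_zero hne, ← Measure.map_addHaar_smul μ hc,
    (measurableEmbedding_const_smul₀ hc).eLpNorm_map_measure]
  rfl

/-- The factor `(2π)^{-d/2}` of the unitary Fourier transform with character `e^{-i x·ξ}`, which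
relates `truncFT` to Mathlib's `𝓕`, whose character is `e^{-2πi x·ξ}`. -/
def fourierConst (d : ℕ) : ℝ :=
  (2 * Real.pi) ^ (-(d : ℝ) / 2)

theorem fourierConst_pos (d : ℕ) : 0 < fourierConst d := by
  unfold fourierConst
  positivity

theorem inv_two_pi_pow_eq_fourierConst_sq (d : ℕ) :
    ((2 * Real.pi) ^ d)⁻¹ = fourierConst d ^ 2 := by
  rw [fourierConst, ← Real.rpow_natCast (_ ^ _), ← Real.rpow_mul (by positivity), Nat.cast_ofNat,
    div_mul_cancel₀ _ two_ne_zero, Real.rpow_neg (by positivity), Real.rpow_natCast]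

variable {d : ℕ} {f fhat : EuclideanSpace ℝ (Fin d) → ℂ}

theorem truncFT_two_pi_smul (f : EuclideanSpace ℝ (Fin d) → ℂ) (R : ℝ)
    (η : EuclideanSpace ℝ (Fin d)) :
    truncFT d f R ((2 * Real.pi) • η) =
      fourierConst d * 𝓕 ((closedBall 0 R).indicator f) η := by
  rw [truncFT, fourierConst, Real.fourier_eq', ← integral_indicator measurableSet_closedBall]
  simp only [Set.indicator_mul_right, smul_eq_mul, inner_smul_right]
  congr! 5
  push_cast
  ring

theorem tendsto_eLpNorm_inv_fourierConst_smul_sub_fourier (h : IsL2Fourier d f fhat) :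
    Tendsto (fun R : ℝ ↦ eLpNorm (fun η ↦ (fourierConst d : ℂ)⁻¹ • fhat ((2 * Real.pi) • η) -
      𝓕 ((closedBall 0 R).indicator f) η) 2) atTop (𝓝 0) := by
  have hc : (fourierConst d : ℂ) ≠ 0 := Complex.ofReal_ne_zero.2 (fourierConst_pos d).ne'
  set K : ℝ≥0∞ := ENNReal.ofReal
    |((2 * Real.pi) ^ Module.finrank ℝ (EuclideanSpace ℝ (Fin d)))⁻¹| ^ (1 / 2 : ℝ≥0∞).toReal
  have hrescale (R : ℝ) : eLpNorm (fun η ↦ (fourierConst d : ℂ)⁻¹ • fhat ((2 * Real.pi) • η) -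
      𝓕 ((closedBall 0 R).indicator f) η) 2 = ‖(fourierConst d : ℂ)⁻¹‖ₑ *
        (K * eLpNorm (fun ξ ↦ fhat ξ - truncFT d f R ξ) 2) := by
    rw [← eLpNorm_comp_smul volume Real.two_pi_pos.ne', ← eLpNorm_const_smul]
    congr 1
    ext η
    rw [Pi.smul_apply, truncFT_two_pi_smul, smul_sub, smul_eq_mul _ (_ * _),
      inv_mul_cancel_left₀ hc]
  have hK : K ≠ ∞ := by finiteness
  simpa only [hrescale, mul_zero] using ENNReal.Tendsto.const_mul
    (ENNReal.Tendsto.const_mul h.2 (Or.inr hK)) (Or.inr enorm_ne_top)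

theorem IsL2Fourier.eq_integral (h : IsL2Fourier d f fhat) (hf : Continuous f)
    (hfhat : Integrable fhat) (x : EuclideanSpace ℝ (Fin d)) :
    f x = fourierConst d * ∫ ξ, Complex.exp (Complex.I * ⟪x, ξ⟫) * fhat ξ := by
  set c : ℂ := (fourierConst d : ℂ)
  set g : EuclideanSpace ℝ (Fin d) → ℂ := fun η ↦ c⁻¹ • fhat ((2 * Real.pi) • η)
  have hg : Integrable g := (hfhat.comp_smul Real.two_pi_pos.ne').smul c⁻¹
  have hg2 : MemLp g 2 := by
    refine MemLp.const_smul ⟨(hfhat.comp_smul Real.two_pi_pos.ne').1, ?_⟩ c⁻¹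
    rw [eLpNorm_comp_smul volume Real.two_pi_pos.ne']
    exact ENNReal.mul_lt_top (by finiteness) h.1.2
  have hc : c ≠ 0 := Complex.ofReal_ne_zero.2 (fourierConst_pos d).ne'
  calc f x = ∫ η, Complex.exp (Complex.I * ⟪x, (2 * Real.pi) • η⟫) *
        (c⁻¹ * fhat ((2 * Real.pi) • η)) := by
        rw [congrFun (eq_fourierInv_of_tendsto_eLpNorm hf hg hg2
          (tendsto_eLpNorm_inv_fourierConst_smul_sub_fourier h)) x, Real.fourierInv_eq']
        simp only [real_inner_comm x, inner_smul_right, mul_comm Complex.I]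
        rfl
    _ = c ^ 2 * ∫ ξ, Complex.exp (Complex.I * ⟪x, ξ⟫) * (c⁻¹ * fhat ξ) := by
        rw [Measure.integral_comp_smul volume fun ξ ↦
          Complex.exp (Complex.I * ⟪x, ξ⟫) * (c⁻¹ * fhat ξ), finrank_euclideanSpace_fin,
          abs_of_pos (by positivity), inv_two_pi_pow_eq_fourierConst_sq, Complex.real_smul,
          Complex.ofReal_pow]
    _ = c * ∫ ξ, Complex.exp (Complex.I * ⟪x, ξ⟫) * fhat ξ := by
        simp only [mul_left_comm _ c⁻¹, integral_const_mul]
        rw [sq, mul_assoc, inv_mul_cancel_left₀ hc]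

theorem IsL2Fourier.sum_norm_sq_le {s B : ℝ} (hs : (d : ℝ) / 2 < s) (hf : Continuous f)
    (h : IsL2Fourier d f fhat) (hA : Integrable fun ξ ↦ (1 + ‖ξ‖ ^ 2) ^ s * ‖fhat ξ‖ ^ 2)
    {ι : Type*} {S : Finset ι} {x : ι → EuclideanSpace ℝ (Fin d)}
    (hB : ∀ n ∈ S, ∑ m ∈ S, Real.exp (-‖x n - x m‖ ^ 2 / 4) ≤ B) (hB0 : 0 < B) :
    ∑ n ∈ S, ‖f (x n)‖ ^ 2 ≤ fourierConst d ^ 2 *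
      (sieveConst d s * B * ∫ ξ, (1 + ‖ξ‖ ^ 2) ^ s * ‖fhat ξ‖ ^ 2) := by
  have hs' : (Module.finrank ℝ (EuclideanSpace ℝ (Fin d)) : ℝ) / 2 < s := by
    rwa [finrank_euclideanSpace_fin]
  have hfhat := integrable_of_integrable_rpow_mul_norm_sq hs' h.1.1 hA
  have hsum := sum_norm_integral_character_mul_sq_le hs' h.1.1 hA hB hB0
  rw [finrank_euclideanSpace_fin] at hsum
  simp only [h.eq_integral hf hfhat, norm_mul, mul_pow, ← Finset.mul_sum, Complex.norm_real,
    Real.norm_of_nonneg (fourierConst_pos d).le]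
  exact mul_le_mul_of_nonneg_left hsum (sq_nonneg _)

end L2FourierInversion

section LatticeSums

theorem hasSum_pow_natAbs {q : ℝ} (hq0 : 0 ≤ q) (hq1 : q < 1) :
    HasSum (fun k : ℤ ↦ q ^ k.natAbs) ((1 + q) / (1 - q)) := by
  have hgeom := hasSum_geometric_of_lt_one hq0 hq1
  have hneg : HasSum (fun n : ℕ ↦ q ^ (-((n : ℤ) + 1)).natAbs) (q * (1 - q)⁻¹) := by
    simpa only [Int.natAbs_neg, ← Nat.cast_add_one, Int.natAbs_natCast, pow_succ']
      using hgeom.mul_left q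
  rw [div_eq_mul_inv, add_mul, one_mul]
  exact HasSum.of_nat_of_neg_add_one (f := fun k : ℤ ↦ q ^ k.natAbs) hgeom hneg

theorem exists_hasSum_exp_neg_mul_abs_sub {ρ : ℝ} (hρ : 0 < ρ) (l : ℤ) :
    ∃ c ≤ 1 + 2 / ρ, HasSum (fun k : ℤ ↦ Real.exp (-ρ * |(l - k : ℝ)|)) c := by
  have hq1 : Real.exp (-ρ) < 1 := Real.exp_lt_one_iff.2 (neg_lt_zero.2 hρ)
  refine ⟨(1 + Real.exp (-ρ)) / (1 - Real.exp (-ρ)), ?_, ?_⟩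
  · have hq : Real.exp (-ρ) * (ρ + 1) ≤ 1 := by
      rw [Real.exp_neg, inv_mul_le_one₀ (Real.exp_pos ρ)]
      exact Real.add_one_le_exp ρ
    rw [one_add_div hρ.ne', div_le_div_iff₀ (by linarith) hρ]
    linarith
  · have hterm (k : ℤ) : Real.exp (-ρ * |(l - k : ℝ)|) = Real.exp (-ρ) ^ (l - k).natAbs := by
      rw [← Real.exp_nat_mul, mul_comm, Nat.cast_natAbs, Int.cast_abs, Int.cast_sub]
    simp only [hterm]
    exact (Equiv.hasSum_iff (f := fun k : ℤ ↦ Real.exp (-ρ) ^ k.natAbs) (Equiv.subLeft l)).2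
      (hasSum_pow_natAbs (Real.exp_pos _).le hq1)

theorem sum_prod_le_prod_of_hasSum {ι κ : Type*} [Fintype ι] {g : ι → κ → ℝ} {c : ι → ℝ}
    (hg : ∀ j k, 0 ≤ g j k) (hsum : ∀ j, HasSum (g j) (c j)) (S : Finset (ι → κ)) :
    ∑ m ∈ S, ∏ j, g j (m j) ≤ ∏ j, c j := by
  classical
  have hS : S ⊆ Fintype.piFinset fun j ↦ S.image (· j) := fun m hm ↦
    Fintype.mem_piFinset.2 fun j ↦ Finset.mem_image_of_mem _ hm
  calc ∑ m ∈ S, ∏ j, g j (m j)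
      ≤ ∑ m ∈ Fintype.piFinset fun j ↦ S.image (· j), ∏ j, g j (m j) :=
        Finset.sum_le_sum_of_subset_of_nonneg hS fun m _ _ ↦ Finset.prod_nonneg fun j _ ↦ hg j _
    _ = ∏ j, ∑ k ∈ S.image (· j), g j k := (Finset.prod_univ_sum _ _).symm
    _ ≤ ∏ j, c j := Finset.prod_le_prod (fun j _ ↦ Finset.sum_nonneg fun k _ ↦ hg j k)
        fun j _ ↦ sum_le_hasSum _ (fun k _ ↦ hg j k) (hsum j)

theorem exp_neg_sq_le_of_abs_sub_le {r ρ k l y z : ℝ} (hρ0 : 0 ≤ ρ) (hρ1 : ρ ≤ 1) (hρr : ρ ≤ r)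
    (hy : |y - r * k| ≤ r) (hz : |z - r * l| ≤ r) :
    Real.exp (-(y - z) ^ 2 / 4) ≤ Real.exp 3 * Real.exp (-ρ * |k - l|) := by
  have hdist : r * (|k - l| - 2) ≤ |y - z| := by
    have hr : |r * k - r * l| = r * |k - l| := by
      rw [← mul_sub, abs_mul, abs_of_nonneg (hρ0.trans hρr)]
    have := abs_sub_le (r * k) y (r * l)
    have := abs_sub_le y z (r * l)
    linarith [abs_sub_comm (r * k) y]
  have hdist' : ρ * (|k - l| - 2) ≤ |y - z| := by
    rcases le_total |k - l| 2 with hkl | hkl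
    · exact (mul_nonpos_of_nonneg_of_nonpos hρ0 (by linarith)).trans (abs_nonneg _)
    · exact (mul_le_mul_of_nonneg_right hρr (by linarith)).trans hdist
  have hsq : |y - z| ≤ (y - z) ^ 2 / 4 + 1 := by
    rw [← sq_abs (y - z)]
    linarith [sq_nonneg (|y - z| - 2)]
  rw [← Real.exp_add, Real.exp_le_exp]
  linarith

theorem sum_exp_neg_norm_sub_sq_le {ι : Type*} [Fintype ι] {r ρ : ℝ} (hρ0 : 0 < ρ)
    (hρ1 : ρ ≤ 1) (hρr : ρ ≤ r) {x : (ι → ℤ) → EuclideanSpace ℝ ι}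
    (hx : ∀ n j, |x n j - r * n j| ≤ r) (S : Finset (ι → ℤ)) (n : ι → ℤ) :
    ∑ m ∈ S, Real.exp (-‖x n - x m‖ ^ 2 / 4) ≤
      (Real.exp 3 * (1 + 2 / ρ)) ^ Fintype.card ι := by
  choose c hcle hc using fun j ↦ exists_hasSum_exp_neg_mul_abs_sub hρ0 (n j)
  calc ∑ m ∈ S, Real.exp (-‖x n - x m‖ ^ 2 / 4)
      = ∑ m ∈ S, ∏ j, Real.exp (-(x n j - x m j) ^ 2 / 4) := by
        simp only [EuclideanSpace.real_norm_sq_eq, ← Finset.sum_neg_distrib, Finset.sum_div,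
          Real.exp_sum, PiLp.sub_apply]
    _ ≤ ∑ m ∈ S, ∏ j, Real.exp 3 * Real.exp (-ρ * |(n j - m j : ℝ)|) :=
        Finset.sum_le_sum fun m _ ↦ Finset.prod_le_prod (fun j _ ↦ (Real.exp_pos _).le)
          fun j _ ↦ exp_neg_sq_le_of_abs_sub_le hρ0.le hρ1 hρr (hx n j) (hx m j)
    _ ≤ ∏ j, Real.exp 3 * c j :=
        sum_prod_le_prod_of_hasSum
          (g := fun j (k : ℤ) ↦ Real.exp 3 * Real.exp (-ρ * |(n j - k : ℝ)|))
          (fun j k ↦ by positivity) (fun j ↦ (hc j).mul_left _) S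
    _ ≤ ∏ _j : ι, Real.exp 3 * (1 + 2 / ρ) :=
        Finset.prod_le_prod (fun j _ ↦ mul_nonneg (Real.exp_pos 3).le
          ((hc j).nonneg fun k ↦ (Real.exp_pos _).le)) fun j _ ↦ by gcongr; exact hcle j
    _ = (Real.exp 3 * (1 + 2 / ρ)) ^ Fintype.card ι := by
        rw [Finset.prod_const, Finset.card_univ]

theorem inv_min_one_pow_le {r : ℝ} (hr : 0 < r) (d : ℕ) :
    (min r 1)⁻¹ ^ d ≤ (1 + r ^ (-(d : ℝ) / 2)) ^ 2 := by
  have hpos : 0 < r ^ (-(d : ℝ) / 2) := Real.rpow_pos_of_pos hr _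
  rcases le_total r 1 with hr1 | hr1
  · calc (min r 1)⁻¹ ^ d = (r ^ (-(d : ℝ) / 2)) ^ 2 := by
          rw [min_eq_left hr1, ← Real.rpow_natCast (r ^ _), ← Real.rpow_mul hr.le, Nat.cast_ofNat,
            div_mul_cancel₀ _ two_ne_zero, Real.rpow_neg hr.le, Real.rpow_natCast, inv_pow]
      _ ≤ (1 + r ^ (-(d : ℝ) / 2)) ^ 2 := by gcongr; linarith
  · rw [min_eq_right hr1, inv_one, one_pow]
    exact one_le_pow₀ (by linarith)

theorem sum_exp_neg_norm_sub_sq_le_one_add_rpow_sq {d : ℕ} {r : ℝ} (hr : 0 < r)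
    {x : (Fin d → ℤ) → EuclideanSpace ℝ (Fin d)} (hx : ∀ n j, |x n j - r * n j| ≤ r)
    (S : Finset (Fin d → ℤ)) (n : Fin d → ℤ) :
    ∑ m ∈ S, Real.exp (-‖x n - x m‖ ^ 2 / 4) ≤
      (3 * Real.exp 3) ^ d * (1 + r ^ (-(d : ℝ) / 2)) ^ 2 := by
  have hρ0 : 0 < min r 1 := lt_min hr one_pos
  have hρ : 1 + 2 / min r 1 ≤ 3 * (min r 1)⁻¹ := by
    rw [div_eq_mul_inv]
    linarith [(one_le_inv₀ hρ0).2 (min_le_right r 1)]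
  calc ∑ m ∈ S, Real.exp (-‖x n - x m‖ ^ 2 / 4)
      ≤ (Real.exp 3 * (1 + 2 / min r 1)) ^ d := by
        simpa only [Fintype.card_fin] using
          sum_exp_neg_norm_sub_sq_le hρ0 (min_le_right r 1) (min_le_left r 1) hx S n
    _ ≤ (Real.exp 3 * (3 * (min r 1)⁻¹)) ^ d := by gcongr
    _ = (3 * Real.exp 3) ^ d * (min r 1)⁻¹ ^ d := by ring
    _ ≤ _ := by
        gcongr
        exact inv_min_one_pow_le hr d

end LatticeSums

section Cubes

theorem isCompact_setOf_abs_sub_le {ι : Type*} [Finite ι] (c : ι → ℝ) (r : ℝ) :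
    IsCompact {x : EuclideanSpace ℝ ι | ∀ j, |x j - c j| ≤ r} := by
  have hbox : {x : EuclideanSpace ℝ ι | ∀ j, |x j - c j| ≤ r} =
      EuclideanSpace.equiv ι ℝ ⁻¹' Set.univ.pi fun j ↦ closedBall (c j) r := by
    ext x
    simp [Real.dist_eq]
  rw [hbox]
  exact (EuclideanSpace.equiv ι ℝ).toHomeomorph.isCompact_preimage.2
    (isCompact_univ_pi fun j ↦ isCompact_closedBall (c j) r)

theorem exists_mem_iSup_mem_le {X : Type*} [TopologicalSpace X] {s : Set X} {g : X → ℝ}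
    (hs : IsCompact s) (hne : s.Nonempty) (hg : ContinuousOn g s) (hg0 : ∀ x ∈ s, 0 ≤ g x) :
    ∃ y ∈ s, ⨆ x ∈ s, g x ≤ g y := by
  obtain ⟨y, hy, hmax⟩ := hs.exists_isMaxOn hne hg
  exact ⟨y, hy, Real.iSup_le (fun x ↦ Real.iSup_le (fun hx ↦ hmax hx) (hg0 y hy)) (hg0 y hy)⟩

theorem exists_sample_iSup_cube_le {d : ℕ} {r : ℝ} (hr : 0 ≤ r)
    {f : EuclideanSpace ℝ (Fin d) → ℂ} (hf : Continuous f) (n : Fin d → ℤ) :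
    ∃ y : EuclideanSpace ℝ (Fin d), (∀ j, |y j - r * n j| ≤ r) ∧
      ⨆ x ∈ {x : EuclideanSpace ℝ (Fin d) | ∀ j, |x j - r * n j| ≤ r}, ‖f x‖ ≤ ‖f y‖ :=
  exists_mem_iSup_mem_le (isCompact_setOf_abs_sub_le (fun j ↦ r * n j) r)
    ⟨WithLp.toLp 2 fun j ↦ r * n j, fun j ↦ by simpa using hr⟩ hf.norm.continuousOn
    fun x _ ↦ norm_nonneg _

theorem rpow_tsum_ofReal_sq_le {ι E : Type*} [SeminormedAddCommGroup E] {u : ι → ℝ} {v : ι → E}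
    {M : ℝ} (huv : ∀ n, u n ≤ ‖v n‖) (hM : 0 ≤ M)
    (hsum : ∀ S : Finset ι, ∑ n ∈ S, ‖v n‖ ^ 2 ≤ M ^ 2) :
    (∑' n, ENNReal.ofReal (u n) ^ 2) ^ (1 / 2 : ℝ) ≤ ENNReal.ofReal M := by
  have htsum : ∑' n, ENNReal.ofReal (u n) ^ 2 ≤ ENNReal.ofReal (M ^ 2) := by
    refine ENNReal.summable.tsum_le_of_sum_le fun S ↦ ?_
    calc ∑ n ∈ S, ENNReal.ofReal (u n) ^ 2 ≤ ∑ n ∈ S, ENNReal.ofReal (‖v n‖ ^ 2) := by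
          refine Finset.sum_le_sum fun n _ ↦ ?_
          rw [ENNReal.ofReal_pow (norm_nonneg _)]
          gcongr
          exact huv n
      _ ≤ ENNReal.ofReal (M ^ 2) := by
          rw [← ENNReal.ofReal_sum_of_nonneg fun n _ ↦ sq_nonneg ‖v n‖]
          exact ENNReal.ofReal_le_ofReal (hsum S)
  calc (∑' n, ENNReal.ofReal (u n) ^ 2) ^ (1 / 2 : ℝ) ≤ ENNReal.ofReal (M ^ 2) ^ (1 / 2 : ℝ) := by
        gcongr
    _ = ENNReal.ofReal M := by
        rw [ENNReal.ofReal_rpow_of_nonneg (by positivity) (by norm_num), ← Real.sqrt_eq_rpow,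
          Real.sqrt_sq hM]

end Cubes

/-- Given `s > d/2`, there is `C = C(s,d) > 0` such that for every `r > 0` and every
continuous `f ∈ L²(ℝ^d)` with `∫ (1+|ξ|²)^s |f̂(ξ)|² dξ < ∞`,
`(Σ_{n ∈ ℤ^d} (sup_{x ∈ Q_r(rn)} |f(x)|)²)^{1/2} ≤ C (1 + r^{-d/2}) (∫ (1+|ξ|²)^s |f̂(ξ)|² dξ)^{1/2}`. -/
theorem statement7 (d : ℕ) (hd : 0 < d) (s : ℝ) (hs : (d : ℝ) / 2 < s) :
    ∃ C : ℝ, 0 < C ∧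
      ∀ r : ℝ, 0 < r →
      ∀ f fhat : EuclideanSpace ℝ (Fin d) → ℂ,
        Continuous f → MemLp f 2 volume → IsL2Fourier d f fhat →
        Integrable (fun ξ => (1 + ‖ξ‖ ^ 2) ^ s * ‖fhat ξ‖ ^ 2) volume →
        (∑' n : Fin d → ℤ,
            (ENNReal.ofReal (⨆ x ∈ {x : EuclideanSpace ℝ (Fin d) | ∀ j, |x j - r * n j| ≤ r},
              ‖f x‖)) ^ 2) ^ ((1 : ℝ) / 2)
          ≤ ENNReal.ofReal (C * (1 + r ^ (-(d : ℝ) / 2)) *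
              Real.sqrt (∫ ξ, (1 + ‖ξ‖ ^ 2) ^ s * ‖fhat ξ‖ ^ 2)) := by
  have hc := fourierConst_pos d
  have hD := sieveConst_pos hs
  refine ⟨fourierConst d * √(sieveConst d s * (3 * Real.exp 3) ^ d), by positivity, ?_⟩
  intro r hr f fhat hf _ hfhat hA
  choose x hxcube hxmax using exists_sample_iSup_cube_le hr.le hf
  refine rpow_tsum_ofReal_sq_le hxmax (by positivity) fun S ↦ ?_
  have hA0 : 0 ≤ ∫ ξ, (1 + ‖ξ‖ ^ 2) ^ s * ‖fhat ξ‖ ^ 2 := integral_nonneg fun ξ ↦ by positivity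
  calc ∑ n ∈ S, ‖f (x n)‖ ^ 2
      ≤ fourierConst d ^ 2 * (sieveConst d s * ((3 * Real.exp 3) ^ d *
          (1 + r ^ (-(d : ℝ) / 2)) ^ 2) * ∫ ξ, (1 + ‖ξ‖ ^ 2) ^ s * ‖fhat ξ‖ ^ 2) :=
        hfhat.sum_norm_sq_le hs hf hA
          (fun n _ ↦ sum_exp_neg_norm_sub_sq_le_one_add_rpow_sq hr hxcube S n) (by positivity)
    _ = _ := by
        rw [mul_pow _ √_, mul_pow _ (1 + _), mul_pow _ √_, Real.sq_sqrt (by positivity),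
          Real.sq_sqrt hA0]
        ring
end
end
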